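/- Let m, n ≥ 2 be integers and let (x, y, θ) be a solution of the self-shrinker profile system on an open interval, and let t₀ be in that interval. If sin θ(t₀) = 0 and y(t₀) > √(2(n−1)), then y has a strict local maximum at t₀; if sin θ(t₀) = 0 and 0 < y(t₀) < √(2(n−1)), then y has a strict local minimum at t₀. In particular the function y − √(2(n−1)) has no positive local minima and no negative local maxima. Analogously, if cos θ(t₀) = 0 and x(t₀) > √(2(m−1)) then x has a strict local maximum at t₀, and if cos θ(t₀) = 0 and 0 < x(t₀) < √(2(m−1)) then x has a strict local minimum at t₀. -/

import Mathlib

open Set Filter Topology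

/-- `(x, y, θ)` solves the self-shrinker profile system
`x' = cos θ`, `y' = sin θ`,
`θ' = (x/2 − (m−1)/x)·sin θ + ((n−1)/y − y/2)·cos θ`, with `x, y > 0`, on the set `S`. -/
def SysSol (m n : ℕ) (x y θ : ℝ → ℝ) (S : Set ℝ) : Prop :=
  ∀ t ∈ S, 0 < x t ∧ 0 < y t ∧
    HasDerivAt x (Real.cos (θ t)) t ∧ HasDerivAt y (Real.sin (θ t)) t ∧
    HasDerivAt θ ((x t / 2 - ((m : ℝ) - 1) / x t) * Real.sin (θ t)
      + (((n : ℝ) - 1) / y t - y t / 2) * Real.cos (θ t)) t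

/-!
If `sin θ(t₀) = 0`, then `y'(t₀) = 0`, `cos² θ(t₀) = 1` and
`y''(t₀) = θ'(t₀) cos θ(t₀) = (n - 1) / y(t₀) - y(t₀) / 2`, whose sign is that of
`2 (n - 1) - y(t₀)²`; the second-derivative test concludes. Reflection in the diagonal,
`(x, y, θ) ↦ (y, x, π / 2 - θ)`, maps solutions to solutions with `m` and `n` exchanged, so the
statements about `x` are those about `y` for the reflected curve.
-/

section SecondDerivativeTest

variable {f f' : ℝ → ℝ} {t₀ c : ℝ}

theorem eventually_lt_of_hasDerivAt_hasDerivAt_pos (hf : ∀ᶠ t in 𝓝 t₀, HasDerivAt f (f' t) t)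
    (hf₀ : f' t₀ = 0) (hf' : HasDerivAt f' c t₀) (hc : 0 < c) :
    ∀ᶠ t in 𝓝[≠] t₀, f t₀ < f t := by
  -- The non-strict test applied to `f - (c / 4) (t - t₀)²`, whose second derivative at `t₀` is
  -- still positive, gives the strict inequality for `f`.
  let g : ℝ → ℝ := fun t ↦ f t - c / 4 * (t - t₀) ^ 2
  have hg : ∀ᶠ t in 𝓝 t₀, HasDerivAt g (f' t - c / 2 * (t - t₀)) t := by
    filter_upwards [hf] with t ht
    have hsq := ((hasDerivAt_id' t).sub_const t₀).fun_pow 2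
    exact (ht.fun_sub (hsq.const_mul (c / 4))).congr_deriv (by ring)
  have hg' : HasDerivAt (fun t ↦ f' t - c / 2 * (t - t₀)) (c / 2) t₀ := by
    have hlin := (hasDerivAt_id' t₀).sub_const t₀
    exact (hf'.fun_sub (hlin.const_mul (c / 2))).congr_deriv (by ring)
  have hderiv : deriv g =ᶠ[𝓝 t₀] fun t ↦ f' t - c / 2 * (t - t₀) := hg.mono fun t ht ↦ ht.deriv
  have hmin : IsLocalMin g t₀ := by
    refine isLocalMin_of_deriv_deriv_pos ?_ ?_ hg.self_of_nhds.continuousAt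
    · rw [hderiv.deriv_eq, hg'.deriv]
      exact half_pos hc
    · simp [hderiv.self_of_nhds, hf₀]
  filter_upwards [hmin.filter_mono nhdsWithin_le_nhds, self_mem_nhdsWithin] with t ht hne
  have hsq : 0 < c / 4 * (t - t₀) ^ 2 := by
    have : t - t₀ ≠ 0 := sub_ne_zero.mpr hne
    positivity
  simp only [g, sub_self] at ht
  linarith

theorem eventually_gt_of_hasDerivAt_hasDerivAt_neg (hf : ∀ᶠ t in 𝓝 t₀, HasDerivAt f (f' t) t)
    (hf₀ : f' t₀ = 0) (hf' : HasDerivAt f' c t₀) (hc : c < 0) :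
    ∀ᶠ t in 𝓝[≠] t₀, f t < f t₀ := by
  have hneg := eventually_lt_of_hasDerivAt_hasDerivAt_pos (hf.mono fun t ht ↦ ht.fun_neg)
    (neg_eq_zero.mpr hf₀) hf'.fun_neg (neg_pos.mpr hc)
  exact hneg.mono fun t ht ↦ neg_lt_neg_iff.mp ht

end SecondDerivativeTest

section OrderedField

variable {K : Type*} [Field K] [LinearOrder K] [IsStrictOrderedRing K] {k z : K}

theorem div_sub_half_pos_iff (hz : 0 < z) : 0 < k / z - z / 2 ↔ z ^ 2 < 2 * k := by
  rw [sub_pos, div_lt_div_iff₀ two_pos hz, ← sq, mul_comm k]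

theorem div_sub_half_neg_iff (hz : 0 < z) : k / z - z / 2 < 0 ↔ 2 * k < z ^ 2 := by
  rw [sub_neg, div_lt_div_iff₀ hz two_pos, ← sq, mul_comm k]

end OrderedField

namespace SysSol

variable {m n : ℕ} {x y θ : ℝ → ℝ} {S : Set ℝ} {t₀ : ℝ}

theorem swap (h : SysSol m n x y θ S) : SysSol n m y x (fun t ↦ Real.pi / 2 - θ t) S := by
  intro t ht
  obtain ⟨hx, hy, hx', hy', hθ'⟩ := h t ht
  simp only [Real.sin_pi_div_two_sub, Real.cos_pi_div_two_sub]
  refine ⟨hy, hx, hy', hx', ?_⟩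
  exact (hθ'.const_sub (Real.pi / 2)).congr_deriv (by ring)

theorem eventually_hasDerivAt_y (h : SysSol m n x y θ S) (hS : S ∈ 𝓝 t₀) :
    ∀ᶠ t in 𝓝 t₀, HasDerivAt y (Real.sin (θ t)) t :=
  mem_of_superset hS fun t ht ↦ (h t ht).2.2.2.1

theorem hasDerivAt_sin_of_sin_eq_zero (h : SysSol m n x y θ S) (ht₀ : t₀ ∈ S)
    (hsin : Real.sin (θ t₀) = 0) :
    HasDerivAt (fun t ↦ Real.sin (θ t)) (((n : ℝ) - 1) / y t₀ - y t₀ / 2) t₀ := by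
  obtain ⟨-, -, -, -, hθ'⟩ := h t₀ ht₀
  have hcos : Real.cos (θ t₀) ^ 2 = 1 := by rw [Real.cos_sq', hsin]; ring
  refine hθ'.sin.congr_deriv ?_
  rw [hsin]
  linear_combination (((n : ℝ) - 1) / y t₀ - y t₀ / 2) * hcos

theorem eventually_y_lt (h : SysSol m n x y θ S) (hS : S ∈ 𝓝 t₀) (hsin : Real.sin (θ t₀) = 0)
    (hy : 2 * ((n : ℝ) - 1) < y t₀ ^ 2) : ∀ᶠ t in 𝓝[≠] t₀, y t < y t₀ := by
  have ht₀ : t₀ ∈ S := mem_of_mem_nhds hS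
  have hpos : 0 < y t₀ := (h t₀ ht₀).2.1
  exact eventually_gt_of_hasDerivAt_hasDerivAt_neg (h.eventually_hasDerivAt_y hS) hsin
    (h.hasDerivAt_sin_of_sin_eq_zero ht₀ hsin) ((div_sub_half_neg_iff hpos).mpr hy)

theorem eventually_lt_y (h : SysSol m n x y θ S) (hS : S ∈ 𝓝 t₀) (hsin : Real.sin (θ t₀) = 0)
    (hy : y t₀ ^ 2 < 2 * ((n : ℝ) - 1)) : ∀ᶠ t in 𝓝[≠] t₀, y t₀ < y t := by
  have ht₀ : t₀ ∈ S := mem_of_mem_nhds hS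
  have hpos : 0 < y t₀ := (h t₀ ht₀).2.1
  exact eventually_lt_of_hasDerivAt_hasDerivAt_pos (h.eventually_hasDerivAt_y hS) hsin
    (h.hasDerivAt_sin_of_sin_eq_zero ht₀ hsin) ((div_sub_half_pos_iff hpos).mpr hy)

end SysSol

/- Squared thresholds avoid the junk value of `√(2 * (k - 1))` at `k = 0`. -/
theorem no_positive_minima_no_negative_maxima_general {m n : ℕ} {x y θ : ℝ → ℝ} {S : Set ℝ}
    {t₀ : ℝ} (hsol : SysSol m n x y θ S) (hS : S ∈ 𝓝 t₀) :
    (Real.sin (θ t₀) = 0 → 2 * ((n : ℝ) - 1) < y t₀ ^ 2 → ∀ᶠ t in 𝓝[≠] t₀, y t < y t₀) ∧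
    (Real.sin (θ t₀) = 0 → y t₀ ^ 2 < 2 * ((n : ℝ) - 1) → ∀ᶠ t in 𝓝[≠] t₀, y t₀ < y t) ∧
    (Real.cos (θ t₀) = 0 → 2 * ((m : ℝ) - 1) < x t₀ ^ 2 → ∀ᶠ t in 𝓝[≠] t₀, x t < x t₀) ∧
    (Real.cos (θ t₀) = 0 → x t₀ ^ 2 < 2 * ((m : ℝ) - 1) → ∀ᶠ t in 𝓝[≠] t₀, x t₀ < x t) := by
  rw [← Real.sin_pi_div_two_sub (θ t₀)]
  exact ⟨hsol.eventually_y_lt hS, hsol.eventually_lt_y hS,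
    hsol.swap.eventually_y_lt hS, hsol.swap.eventually_lt_y hS⟩

/-- at a critical point `t₀` of `y` (i.e. `sin θ(t₀) = 0`), `y` has a strict
local maximum if `y(t₀) > √(2(n−1))` and a strict local minimum if `y(t₀) < √(2(n−1))`;
in particular `y − √(2(n−1))` has no positive local minima and no negative local maxima.
Analogously for `x` at critical points of `x` (where `cos θ(t₀) = 0`) with the value
`√(2(m−1))`. -/
theorem no_positive_minima_no_negative_maxima (m n : ℕ) (hm : 2 ≤ m) (hn : 2 ≤ n)
    (a b t₀ : ℝ) (x y θ : ℝ → ℝ)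
    (hsol : SysSol m n x y θ (Ioo a b)) (ht₀ : t₀ ∈ Ioo a b) :
    (Real.sin (θ t₀) = 0 → Real.sqrt (2 * ((n : ℝ) - 1)) < y t₀ →
      ∀ᶠ t in 𝓝[≠] t₀, y t < y t₀) ∧
    (Real.sin (θ t₀) = 0 → y t₀ < Real.sqrt (2 * ((n : ℝ) - 1)) →
      ∀ᶠ t in 𝓝[≠] t₀, y t₀ < y t) ∧
    (Real.cos (θ t₀) = 0 → Real.sqrt (2 * ((m : ℝ) - 1)) < x t₀ →
      ∀ᶠ t in 𝓝[≠] t₀, x t < x t₀) ∧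
    (Real.cos (θ t₀) = 0 → x t₀ < Real.sqrt (2 * ((m : ℝ) - 1)) →
      ∀ᶠ t in 𝓝[≠] t₀, x t₀ < x t) := by
  obtain ⟨hx, hy, -⟩ := hsol t₀ ht₀
  simpa only [Real.sqrt_lt' hx, Real.sqrt_lt' hy, Real.lt_sqrt hx.le, Real.lt_sqrt hy.le] using
    no_positive_minima_no_negative_maxima_general hsol (Ioo_mem_nhds ht₀.1 ht₀.2)
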